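/- arXiv:1412.1925 — 4 statements merged into one kernel-verified Lean document; each statement's English description precedes it below -/
import Mathlib

section
/- Let v₁, v₂ be a smooth immersed solution of the rescaled isotropic curve shortening system. Then for every τ, d/dτ ∫₀^{2π} e^{−(v₁²+v₂²)/4} · √(v₁'²+v₂'²) dx = − ∫₀^{2π} N² · e^{−(v₁²+v₂²)/4} · √(v₁'²+v₂'²) dx (Huisken's monotonicity formula in the plane). -/
open Real

/-!
Differentiating `∫ e^{-|γ|²/4} |γ'| dx` in time produces `⟪γ', V'⟫ / |γ'|` with `V = ∂_τ γ`; since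
`∂_τ ∂_x γ = ∂_x ∂_τ γ`, integrating this term by parts removes the derivative from `V`, and the
boundary terms cancel by periodicity. What is left is
`-∫ ⟪(γ/2 + γ''/|γ'|²)^⊥, V⟫ e^{-|γ|²/4} |γ'| dx`, where `⊥` is the component normal to `γ'`. The
flow equation says that `V` and `γ/2 + γ''/|γ'|²` have the same normal component, so the pairing is
`|V^⊥|²`. The argument works in every real inner product space and ignores tangential motion; the
planar system is the case of curves in `ℂ`.
-/

open Set Function
open scoped RealInnerProductSpace

section PartialDerivatives

variable {E : Type*} [NormedAddCommGroup E] [NormedSpace ℝ E] {f : ℝ → ℝ → E}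

lemma hasDerivAt_fst_of_differentiableAt_uncurry {t x : ℝ}
    (hf : DifferentiableAt ℝ (uncurry f) (t, x)) :
    HasDerivAt (fun s => f s x) (fderiv ℝ (uncurry f) (t, x) (1, 0)) t :=
  HasFDerivAt.comp_hasDerivAt (f := fun s => (s, x)) t hf.hasFDerivAt
    ((hasDerivAt_id' t).prodMk (hasDerivAt_const t x))

lemma hasDerivAt_snd_of_differentiableAt_uncurry {t x : ℝ}
    (hf : DifferentiableAt ℝ (uncurry f) (t, x)) :
    HasDerivAt (f t) (fderiv ℝ (uncurry f) (t, x) (0, 1)) x :=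
  hf.hasFDerivAt.comp_hasDerivAt x ((hasDerivAt_const x t).prodMk (hasDerivAt_id' x))

lemma uncurry_deriv_fst (hf : Differentiable ℝ (uncurry f)) :
    uncurry (fun t x => deriv (fun s => f s x) t) = fun z => fderiv ℝ (uncurry f) z (1, 0) :=
  funext fun z => (hasDerivAt_fst_of_differentiableAt_uncurry (hf z)).deriv

lemma uncurry_deriv_snd (hf : Differentiable ℝ (uncurry f)) :
    uncurry (fun t x => deriv (f t) x) = fun z => fderiv ℝ (uncurry f) z (0, 1) :=
  funext fun z => (hasDerivAt_snd_of_differentiableAt_uncurry (hf z)).deriv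

lemma contDiff_uncurry_deriv_fst {n : WithTop ℕ∞} (hf : ContDiff ℝ (n + 1) (uncurry f)) :
    ContDiff ℝ n (uncurry fun t x => deriv (fun s => f s x) t) := by
  rw [uncurry_deriv_fst (hf.differentiable (by simp))]
  exact (hf.fderiv_right le_rfl).clm_apply contDiff_const

lemma contDiff_uncurry_deriv_snd {n : WithTop ℕ∞} (hf : ContDiff ℝ (n + 1) (uncurry f)) :
    ContDiff ℝ n (uncurry fun t x => deriv (f t) x) := by
  rw [uncurry_deriv_snd (hf.differentiable (by simp))]
  exact (hf.fderiv_right le_rfl).clm_apply contDiff_const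

lemma contDiff_of_contDiff_uncurry {n : WithTop ℕ∞} (hf : ContDiff ℝ n (uncurry f)) (t : ℝ) :
    ContDiff ℝ n (f t) :=
  hf.comp (contDiff_prodMk_right t)

lemma differentiable_fst_of_differentiable_uncurry (hf : Differentiable ℝ (uncurry f)) (x : ℝ) :
    Differentiable ℝ fun s => f s x :=
  fun t => (hasDerivAt_fst_of_differentiableAt_uncurry (hf (t, x))).differentiableAt

lemma deriv_deriv_comm_of_contDiff_uncurry (hf : ContDiff ℝ 2 (uncurry f)) (t x : ℝ) :
    deriv (fun s => deriv (f s) x) t = deriv (fun y => deriv (fun s => f s y) t) x := by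
  have hdiff : Differentiable ℝ (uncurry f) := hf.differentiable two_ne_zero
  have hfderiv : DifferentiableAt ℝ (fderiv ℝ (uncurry f)) (t, x) :=
    (hf.fderiv_right (m := 1) le_rfl).differentiable one_ne_zero _
  have hsymm : IsSymmSndFDerivAt ℝ (uncurry f) (t, x) :=
    hf.contDiffAt.isSymmSndFDerivAt (by simp)
  have hfst := (contDiff_uncurry_deriv_fst (n := 1) hf).differentiable one_ne_zero (t, x)
  have hsnd := (contDiff_uncurry_deriv_snd (n := 1) hf).differentiable one_ne_zero (t, x)
  rw [(hasDerivAt_fst_of_differentiableAt_uncurry hsnd).deriv,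
    (hasDerivAt_snd_of_differentiableAt_uncurry hfst).deriv,
    uncurry_deriv_fst hdiff, uncurry_deriv_snd hdiff,
    fderiv_clm_apply hfderiv (by fun_prop), fderiv_clm_apply hfderiv (by fun_prop)]
  simpa using hsymm.eq (1, 0) (0, 1)

lemma hasDerivAt_intervalIntegral_of_contDiff_uncurry (hf : ContDiff ℝ 1 (uncurry f))
    (a b t : ℝ) :
    HasDerivAt (fun s => ∫ x in a..b, f s x) (∫ x in a..b, deriv (fun s => f s x) t) t := by
  have hcont : Continuous (uncurry fun s x => deriv (fun s => f s x) s) :=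
    (contDiff_uncurry_deriv_fst (n := 0) hf).continuous
  have hslice (s : ℝ) : Continuous (f s) := (contDiff_of_contDiff_uncurry hf s).continuous
  obtain ⟨C, hC⟩ := ((isCompact_Icc (a := t - 1) (b := t + 1)).prod
    (isCompact_uIcc (a := a) (b := b))).exists_bound_of_continuousOn hcont.continuousOn
  refine (intervalIntegral.hasDerivAt_integral_of_dominated_loc_of_deriv_le
    (F' := fun s x => deriv (fun s => f s x) s) (bound := fun _ => C)
    (Icc_mem_nhds (by linarith : t - 1 < t) (by linarith : t < t + 1))
    (.of_forall fun s => (hslice s).aestronglyMeasurable)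
    ((hslice t).intervalIntegrable _ _)
    (hcont.comp (.prodMk_right t)).aestronglyMeasurable ?_ intervalIntegrable_const ?_).2
  · exact .of_forall fun x hx s hs => hC (s, x) ⟨hs, uIoc_subset_uIcc hx⟩
  · exact .of_forall fun x _ s _ => (differentiable_fst_of_differentiable_uncurry
      (hf.differentiable one_ne_zero) x s).hasDerivAt

end PartialDerivatives

lemma periodic_deriv {E : Type*} [NormedAddCommGroup E] [NormedSpace ℝ E] {c : ℝ → E} {T : ℝ}
    (hc : Periodic c T) : Periodic (deriv c) T := fun x => by
  rw [← deriv_comp_add_const, hc.funext]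

section InnerProductSpace

variable {E : Type*} [NormedAddCommGroup E] [InnerProductSpace ℝ E]

lemma real_inner_starProjection_self (K : Submodule ℝ E) [K.HasOrthogonalProjection] (v : E) :
    ⟪K.starProjection v, v⟫ = ‖K.starProjection v‖ ^ 2 :=
  K.re_inner_starProjection_eq_normSq v

lemma real_inner_starProjection_orthogonal_singleton (u v w : E) :
    ⟪(ℝ ∙ u)ᗮ.starProjection v, w⟫ = ⟪v, w⟫ - ⟪u, v⟫ * ⟪u, w⟫ / ‖u‖ ^ 2 := by
  rw [Submodule.starProjection_orthogonal_val, Submodule.starProjection_singleton, inner_sub_left,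
    real_inner_smul_left, RCLike.ofReal_real_eq_id, id, div_mul_eq_mul_div]

lemma hasDerivAt_norm_of_ne_zero {c : ℝ → E} {c' : E} {x : ℝ} (hc : HasDerivAt c c' x)
    (h0 : c x ≠ 0) : HasDerivAt (fun y => ‖c y‖) (⟪c x, c'⟫ / ‖c x‖) x := by
  have h := hc.norm_sq.sqrt (pow_ne_zero 2 (norm_ne_zero_iff.2 h0))
  simpa only [Real.sqrt_sq (norm_nonneg _), mul_div_mul_left _ _ (two_ne_zero' ℝ)] using h

lemma hasDerivAt_exp_neg_norm_sq_div_four {c : ℝ → E} {c' : E} {x : ℝ} (hc : HasDerivAt c c' x) :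
    HasDerivAt (fun y => exp (-‖c y‖ ^ 2 / 4)) (exp (-‖c x‖ ^ 2 / 4) * (-⟪c x, c'⟫ / 2)) x := by
  refine (hc.norm_sq.fun_neg.div_const 4).exp.congr_deriv ?_
  ring

lemma contDiff_exp_neg_norm_sq_div_four {F : Type*} [NormedAddCommGroup F] [NormedSpace ℝ F]
    {g : F → E} {n : WithTop ℕ∞} (hg : ContDiff ℝ n g) :
    ContDiff ℝ n fun y => exp (-‖g y‖ ^ 2 / 4) :=
  ((hg.norm_sq ℝ).neg.div_const 4).exp

/-- The length element `e^{-|c|²/4} |c'|` of the curve `c` in the Gaussian metric, with respect to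
the parameter of `c`. -/
noncomputable def gaussianSpeed (c : ℝ → E) (x : ℝ) : ℝ :=
  exp (-‖c x‖ ^ 2 / 4) * ‖deriv c x‖

/-- The orthogonal projection onto the normal space of the curve `c` at parameter `x`. -/
noncomputable def normalProjection (c : ℝ → E) (x : ℝ) : E →L[ℝ] E :=
  (ℝ ∙ deriv c x)ᗮ.starProjection

/-- The vector `c / 2 + c'' / |c'|²`, which prescribes the velocity of the rescaled curve shortening
flow up to tangential motion: `c'' / |c'|²` is not the curvature vector of `c`, but has it as its
normal component. -/
noncomputable def rescaledFlowVector (c : ℝ → E) (x : ℝ) : E :=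
  (1 / 2 : ℝ) • c x + (‖deriv c x‖ ^ 2)⁻¹ • deriv (deriv c) x

/-- The Gaussian weight times the component of the vector field `V` in the direction of the unit
tangent of `c`; it is the quantity differentiated in the integration by parts. -/
noncomputable def gaussianTangentialFlux (c V : ℝ → E) (x : ℝ) : ℝ :=
  exp (-‖c x‖ ^ 2 / 4) * (⟪deriv c x, V x⟫ / ‖deriv c x‖)

lemma hasDerivAt_gaussianSpeed {γ : ℝ → ℝ → E} (hγ : ContDiff ℝ 2 (uncurry γ)) {τ x : ℝ}
    (himm : deriv (γ τ) x ≠ 0) :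
    HasDerivAt (fun σ => gaussianSpeed (γ σ) x)
      (exp (-‖γ τ x‖ ^ 2 / 4) *
        (⟪deriv (γ τ) x, deriv (fun y => deriv (fun s => γ s y) τ) x⟫ / ‖deriv (γ τ) x‖
          - ⟪γ τ x, deriv (fun s => γ s x) τ⟫ / 2 * ‖deriv (γ τ) x‖)) τ := by
  have hweight := hasDerivAt_exp_neg_norm_sq_div_four (differentiable_fst_of_differentiable_uncurry
    (hγ.differentiable two_ne_zero) x τ).hasDerivAt
  have htangent := (differentiable_fst_of_differentiable_uncurry
    ((contDiff_uncurry_deriv_snd (n := 1) hγ).differentiable one_ne_zero) x τ).hasDerivAt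
  rw [deriv_deriv_comm_of_contDiff_uncurry hγ] at htangent
  refine (hweight.mul (hasDerivAt_norm_of_ne_zero htangent himm)).congr_deriv ?_
  ring

lemma hasDerivAt_gaussianTangentialFlux {c V : ℝ → E} {x : ℝ} (hc : DifferentiableAt ℝ c x)
    (hc' : DifferentiableAt ℝ (deriv c) x) (hV : DifferentiableAt ℝ V x) (himm : deriv c x ≠ 0) :
    HasDerivAt (gaussianTangentialFlux c V)
      (exp (-‖c x‖ ^ 2 / 4) * (⟪deriv c x, deriv V x⟫ / ‖deriv c x‖
        + ⟪deriv (deriv c) x, V x⟫ / ‖deriv c x‖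
        - ⟪deriv c x, V x⟫ * ⟪deriv c x, deriv (deriv c) x⟫ / ‖deriv c x‖ ^ 3
        - ⟪c x, deriv c x⟫ / 2 * (⟪deriv c x, V x⟫ / ‖deriv c x‖))) x := by
  have hnorm : ‖deriv c x‖ ≠ 0 := norm_ne_zero_iff.2 himm
  refine ((hasDerivAt_exp_neg_norm_sq_div_four hc.hasDerivAt).mul
    ((hc'.hasDerivAt.inner ℝ hV.hasDerivAt).fun_div
      (hasDerivAt_norm_of_ne_zero hc'.hasDerivAt himm) hnorm)).congr_deriv ?_
  field_simp
  ring

lemma deriv_gaussianSpeed_sub_deriv_gaussianTangentialFlux {γ : ℝ → ℝ → E}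
    (hγ : ContDiff ℝ 2 (uncurry γ)) {τ x : ℝ} (himm : deriv (γ τ) x ≠ 0) :
    deriv (fun σ => gaussianSpeed (γ σ) x) τ
        - deriv (gaussianTangentialFlux (γ τ) fun y => deriv (fun s => γ s y) τ) x =
      -(⟪normalProjection (γ τ) x (rescaledFlowVector (γ τ) x), deriv (fun s => γ s x) τ⟫
        * gaussianSpeed (γ τ) x) := by
  have hslice : ContDiff ℝ 2 (γ τ) := contDiff_of_contDiff_uncurry hγ τ
  have hV : ContDiff ℝ 1 fun y => deriv (fun s => γ s y) τ :=
    contDiff_of_contDiff_uncurry (contDiff_uncurry_deriv_fst (n := 1) hγ) τ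
  have hnorm : ‖deriv (γ τ) x‖ ≠ 0 := norm_ne_zero_iff.2 himm
  rw [(hasDerivAt_gaussianSpeed hγ himm).deriv,
    (hasDerivAt_gaussianTangentialFlux (hslice.differentiable two_ne_zero x)
      ((hslice.deriv' (n := 1)).differentiable one_ne_zero x)
      (hV.differentiable one_ne_zero x) himm).deriv,
    normalProjection, real_inner_starProjection_orthogonal_singleton, rescaledFlowVector,
    gaussianSpeed]
  simp only [inner_add_left, inner_add_right, real_inner_smul_left, real_inner_smul_right,
    real_inner_comm (γ τ x) (deriv (γ τ) x)]
  field_simp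
  ring

lemma contDiff_uncurry_gaussianSpeed {γ : ℝ → ℝ → E} (hγ : ContDiff ℝ 2 (uncurry γ))
    (himm : ∀ t x, deriv (γ t) x ≠ 0) : ContDiff ℝ 1 (uncurry fun σ => gaussianSpeed (γ σ)) :=
  (contDiff_exp_neg_norm_sq_div_four (hγ.of_le one_le_two)).mul
    ((contDiff_uncurry_deriv_snd (n := 1) hγ).norm ℝ fun z => himm z.1 z.2)

lemma contDiff_gaussianTangentialFlux {c V : ℝ → E} (hc : ContDiff ℝ 2 c) (hV : ContDiff ℝ 1 V)
    (himm : ∀ x, deriv c x ≠ 0) : ContDiff ℝ 1 (gaussianTangentialFlux c V) :=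
  have hc' : ContDiff ℝ 1 (deriv c) := hc.deriv' (n := 1)
  (contDiff_exp_neg_norm_sq_div_four (hc.of_le one_le_two)).mul
    ((hc'.inner ℝ hV).div (hc'.norm ℝ himm) fun x => norm_ne_zero_iff.2 (himm x))

lemma periodic_gaussianTangentialFlux {c V : ℝ → E} {T : ℝ} (hc : Periodic c T)
    (hV : Periodic V T) : Periodic (gaussianTangentialFlux c V) T := fun x => by
  simp only [gaussianTangentialFlux, hc x, hV x, periodic_deriv hc x]

theorem hasDerivAt_integral_gaussianSpeed {γ : ℝ → ℝ → E} (hγ : ContDiff ℝ 2 (uncurry γ)) {T : ℝ}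
    (hper : ∀ t, Periodic (γ t) T) (himm : ∀ t x, deriv (γ t) x ≠ 0) (τ : ℝ) :
    HasDerivAt (fun σ => ∫ x in (0 : ℝ)..T, gaussianSpeed (γ σ) x)
      (-∫ x in (0 : ℝ)..T,
        ⟪normalProjection (γ τ) x (rescaledFlowVector (γ τ) x), deriv (fun s => γ s x) τ⟫
          * gaussianSpeed (γ τ) x) τ := by
  set V : ℝ → E := fun x => deriv (fun s => γ s x) τ
  have hVper : Periodic V T := fun x => by simp only [V, hper _ x]
  have hspeed := contDiff_uncurry_gaussianSpeed hγ himm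
  have hspeed' : Continuous fun x => deriv (fun σ => gaussianSpeed (γ σ) x) τ :=
    (contDiff_of_contDiff_uncurry (contDiff_uncurry_deriv_fst (n := 0) hspeed) τ).continuous
  have hflux : ContDiff ℝ 1 (gaussianTangentialFlux (γ τ) V) :=
    contDiff_gaussianTangentialFlux (contDiff_of_contDiff_uncurry hγ τ)
      (contDiff_of_contDiff_uncurry (contDiff_uncurry_deriv_fst (n := 1) hγ) τ) (himm τ)
  have hflux' : Continuous (deriv (gaussianTangentialFlux (γ τ) V)) :=
    hflux.continuous_deriv le_rfl
  have hboundary : ∫ x in (0 : ℝ)..T, deriv (gaussianTangentialFlux (γ τ) V) x = 0 := by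
    rw [intervalIntegral.integral_deriv_eq_sub
      (fun x _ => hflux.differentiable one_ne_zero x) (hflux'.intervalIntegrable _ _),
      (periodic_gaussianTangentialFlux (hper τ) hVper).eq, sub_self]
  refine (hasDerivAt_intervalIntegral_of_contDiff_uncurry hspeed 0 T τ).congr_deriv (Eq.symm ?_)
  calc -∫ x in (0 : ℝ)..T, ⟪normalProjection (γ τ) x (rescaledFlowVector (γ τ) x), V x⟫
          * gaussianSpeed (γ τ) x
      = ∫ x in (0 : ℝ)..T, (deriv (fun σ => gaussianSpeed (γ σ) x) τ
          - deriv (gaussianTangentialFlux (γ τ) V) x) := by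
        rw [← intervalIntegral.integral_neg]
        simp only [V, deriv_gaussianSpeed_sub_deriv_gaussianTangentialFlux hγ (himm τ _)]
    _ = ∫ x in (0 : ℝ)..T, deriv (fun σ => gaussianSpeed (γ σ) x) τ := by
        rw [intervalIntegral.integral_sub (hspeed'.intervalIntegrable _ _)
          (hflux'.intervalIntegrable _ _), hboundary, sub_zero]

theorem huisken_monotonicity_formula_general {γ : ℝ → ℝ → E} (hγ : ContDiff ℝ 2 (uncurry γ))
    {T : ℝ} (hper : ∀ t, Periodic (γ t) T) (himm : ∀ t x, deriv (γ t) x ≠ 0) {τ : ℝ}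
    (hflow : ∀ x, deriv (fun s => γ s x) τ - rescaledFlowVector (γ τ) x ∈ ℝ ∙ deriv (γ τ) x) :
    HasDerivAt (fun σ => ∫ x in (0 : ℝ)..T, gaussianSpeed (γ σ) x)
      (-∫ x in (0 : ℝ)..T,
        ‖normalProjection (γ τ) x (deriv (fun s => γ s x) τ)‖ ^ 2 * gaussianSpeed (γ τ) x) τ := by
  have hnormal (x : ℝ) : normalProjection (γ τ) x (rescaledFlowVector (γ τ) x) =
      normalProjection (γ τ) x (deriv (fun s => γ s x) τ) := by
    rw [eq_comm, ← sub_eq_zero, ← map_sub, normalProjection,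
      Submodule.starProjection_apply_eq_zero_iff, Submodule.orthogonal_orthogonal]
    exact hflow x
  have hpairing (x : ℝ) :
      ‖normalProjection (γ τ) x (deriv (fun s => γ s x) τ)‖ ^ 2 =
        ⟪normalProjection (γ τ) x (rescaledFlowVector (γ τ) x), deriv (fun s => γ s x) τ⟫ := by
    rw [hnormal, normalProjection, real_inner_starProjection_self]
  simpa only [hpairing] using hasDerivAt_integral_gaussianSpeed hγ hper himm τ

end InnerProductSpace

section Plane

/-- The curve `(f, g)` in the Euclidean plane, which is realised as `ℂ`. -/
def planeCurve (f g : ℝ → ℝ) (x : ℝ) : ℂ :=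
  ⟨f x, g x⟩

lemma deriv_planeCurve {f g : ℝ → ℝ} (hf : Differentiable ℝ f) (hg : Differentiable ℝ g) :
    deriv (planeCurve f g) = planeCurve (deriv f) (deriv g) :=
  funext fun x => (Complex.equivRealProdCLM.symm.hasFDerivAt.comp_hasDerivAt x
    ((hf x).hasDerivAt.prodMk (hg x).hasDerivAt)).deriv

lemma deriv_planeCurve_fst {v₁ v₂ : ℝ → ℝ → ℝ} (hv₁ : Differentiable ℝ (uncurry v₁))
    (hv₂ : Differentiable ℝ (uncurry v₂)) (t x : ℝ) :
    deriv (fun s => planeCurve (v₁ s) (v₂ s) x) t =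
      planeCurve (fun y => deriv (fun s => v₁ s y) t) (fun y => deriv (fun s => v₂ s y) t) x :=
  congrFun (deriv_planeCurve (differentiable_fst_of_differentiable_uncurry hv₁ x)
    (differentiable_fst_of_differentiable_uncurry hv₂ x)) t

lemma contDiff_uncurry_planeCurve {v₁ v₂ : ℝ → ℝ → ℝ} {n : WithTop ℕ∞}
    (hv₁ : ContDiff ℝ n (uncurry v₁)) (hv₂ : ContDiff ℝ n (uncurry v₂)) :
    ContDiff ℝ n (uncurry fun t => planeCurve (v₁ t) (v₂ t)) :=
  Complex.equivRealProdCLM.symm.contDiff.comp (hv₁.prodMk hv₂)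

lemma norm_planeCurve (f g : ℝ → ℝ) (x : ℝ) : ‖planeCurve f g x‖ = √(f x ^ 2 + g x ^ 2) :=
  Complex.norm_eq_sqrt_sq_add_sq _

lemma norm_sq_planeCurve (f g : ℝ → ℝ) (x : ℝ) : ‖planeCurve f g x‖ ^ 2 = f x ^ 2 + g x ^ 2 := by
  rw [norm_planeCurve, Real.sq_sqrt (by positivity)]

lemma planeCurve_ne_zero {f g : ℝ → ℝ} {x : ℝ} (h : 0 < f x ^ 2 + g x ^ 2) :
    planeCurve f g x ≠ 0 := by
  rwa [← norm_pos_iff, norm_planeCurve, Real.sqrt_pos]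

lemma norm_sq_starProjection_orthogonal_complex {u : ℂ} (hu : u ≠ 0) (z : ℂ) :
    ‖(ℝ ∙ u)ᗮ.starProjection z‖ ^ 2 = ((u.im * z.re - u.re * z.im) / ‖u‖) ^ 2 := by
  have hnorm : ‖u‖ ≠ 0 := norm_ne_zero_iff.2 hu
  rw [← real_inner_starProjection_self, real_inner_starProjection_orthogonal_singleton, div_pow]
  field_simp
  simp only [Complex.sq_norm, Complex.normSq_apply, Complex.inner, Complex.mul_re,
    Complex.conj_re, Complex.conj_im]
  ring

lemma deriv_planeCurve_ne_zero {f g : ℝ → ℝ} (hf : Differentiable ℝ f) (hg : Differentiable ℝ g)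
    {x : ℝ} (himm : 0 < deriv f x ^ 2 + deriv g x ^ 2) : deriv (planeCurve f g) x ≠ 0 := by
  rw [deriv_planeCurve hf hg]
  exact planeCurve_ne_zero himm

lemma periodic_planeCurve {f g : ℝ → ℝ} {T : ℝ} (hf : Periodic f T) (hg : Periodic g T) :
    Periodic (planeCurve f g) T := fun x => by
  simp only [planeCurve, hf x, hg x]

lemma planeCurve_sub_rescaledFlowVector_mem_span {f g a b : ℝ → ℝ} (hf : ContDiff ℝ 2 f)
    (hg : ContDiff ℝ 2 g) {x : ℝ} (himm : 0 < deriv f x ^ 2 + deriv g x ^ 2)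
    (ha : a x = f x / 2 - deriv g x *
      ((-(deriv (deriv f) x) * deriv g x + deriv f x * deriv (deriv g) x) /
        (deriv f x ^ 2 + deriv g x ^ 2) ^ 2))
    (hb : b x = g x / 2 + deriv f x *
      ((-(deriv (deriv f) x) * deriv g x + deriv f x * deriv (deriv g) x) /
        (deriv f x ^ 2 + deriv g x ^ 2) ^ 2)) :
    planeCurve a b x - rescaledFlowVector (planeCurve f g) x ∈
      ℝ ∙ deriv (planeCurve f g) x := by
  have hc' : deriv (planeCurve f g) = planeCurve (deriv f) (deriv g) :=
    deriv_planeCurve (hf.differentiable two_ne_zero) (hg.differentiable two_ne_zero)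
  have hc'' : deriv (planeCurve (deriv f) (deriv g)) =
      planeCurve (deriv (deriv f)) (deriv (deriv g)) :=
    deriv_planeCurve ((hf.deriv' (n := 1)).differentiable one_ne_zero)
      ((hg.deriv' (n := 1)).differentiable one_ne_zero)
  -- `(a, b) - c / 2` is the curvature vector of `c`; the factor comes from the tangential part
  -- `⟪c', c''⟫ c' / |c'|⁴` of `c'' / |c'|²`.
  refine Submodule.mem_span_singleton.2 ⟨-(deriv f x * deriv (deriv f) x
    + deriv g x * deriv (deriv g) x) / (deriv f x ^ 2 + deriv g x ^ 2) ^ 2, ?_⟩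
  rw [rescaledFlowVector, hc', hc'', norm_sq_planeCurve]
  apply Complex.ext
  · simp only [planeCurve, Complex.smul_re, Complex.sub_re, Complex.add_re, smul_eq_mul, ha]
    field_simp
    ring
  · simp only [planeCurve, Complex.smul_im, Complex.sub_im, Complex.add_im, smul_eq_mul, hb]
    field_simp
    ring

lemma gaussianSpeed_planeCurve {f g : ℝ → ℝ} (hf : Differentiable ℝ f) (hg : Differentiable ℝ g)
    (x : ℝ) :
    gaussianSpeed (planeCurve f g) x =
      exp (-(f x ^ 2 + g x ^ 2) / 4) * √(deriv f x ^ 2 + deriv g x ^ 2) := by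
  rw [gaussianSpeed, norm_sq_planeCurve, deriv_planeCurve hf hg, norm_planeCurve]

lemma norm_sq_normalProjection_planeCurve {f g : ℝ → ℝ} (hf : Differentiable ℝ f)
    (hg : Differentiable ℝ g) {x : ℝ} (himm : 0 < deriv f x ^ 2 + deriv g x ^ 2) (a b : ℝ → ℝ) :
    ‖normalProjection (planeCurve f g) x (planeCurve a b x)‖ ^ 2 =
      ((deriv g x * a x - deriv f x * b x) / √(deriv f x ^ 2 + deriv g x ^ 2)) ^ 2 := by
  simp only [normalProjection, deriv_planeCurve hf hg]
  rw [norm_sq_starProjection_orthogonal_complex (planeCurve_ne_zero himm), norm_planeCurve]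
  rfl

end Plane

/-- Huisken's monotonicity formula in the plane for the rescaled isotropic
curve shortening flow:
`d/dτ ∫₀^{2π} e^{−(v₁²+v₂²)/4} √(v₁'²+v₂'²) dx
  = −∫₀^{2π} N² e^{−(v₁²+v₂²)/4} √(v₁'²+v₂'²) dx`. -/
theorem huisken_monotonicity_formula
    (v₁ v₂ : ℝ → ℝ → ℝ)
    (hv₁ : ContDiff ℝ (⊤ : ℕ∞) (Function.uncurry v₁))
    (hv₂ : ContDiff ℝ (⊤ : ℕ∞) (Function.uncurry v₂))
    (hper₁ : ∀ τ x : ℝ, v₁ τ (x + 2 * π) = v₁ τ x)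
    (hper₂ : ∀ τ x : ℝ, v₂ τ (x + 2 * π) = v₂ τ x)
    (himm : ∀ τ x : ℝ, 0 < (deriv (v₁ τ) x) ^ 2 + (deriv (v₂ τ) x) ^ 2)
    (hpde₁ : ∀ τ x : ℝ, deriv (fun s => v₁ s x) τ =
      v₁ τ x / 2 - deriv (v₂ τ) x *
        ((-(deriv (deriv (v₁ τ)) x) * deriv (v₂ τ) x
            + deriv (v₁ τ) x * deriv (deriv (v₂ τ)) x) /
          ((deriv (v₁ τ) x) ^ 2 + (deriv (v₂ τ) x) ^ 2) ^ 2))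
    (hpde₂ : ∀ τ x : ℝ, deriv (fun s => v₂ s x) τ =
      v₂ τ x / 2 + deriv (v₁ τ) x *
        ((-(deriv (deriv (v₁ τ)) x) * deriv (v₂ τ) x
            + deriv (v₁ τ) x * deriv (deriv (v₂ τ)) x) /
          ((deriv (v₁ τ) x) ^ 2 + (deriv (v₂ τ) x) ^ 2) ^ 2))
    (N : ℝ → ℝ → ℝ)
    (hN : ∀ τ x : ℝ, N τ x =
      (deriv (v₂ τ) x * deriv (fun s => v₁ s x) τ
        - deriv (v₁ τ) x * deriv (fun s => v₂ s x) τ) /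
        Real.sqrt ((deriv (v₁ τ) x) ^ 2 + (deriv (v₂ τ) x) ^ 2)) :
    ∀ τ : ℝ, HasDerivAt
      (fun σ => ∫ x in (0:ℝ)..(2 * π),
        Real.exp (-((v₁ σ x) ^ 2 + (v₂ σ x) ^ 2) / 4) *
          Real.sqrt ((deriv (v₁ σ) x) ^ 2 + (deriv (v₂ σ) x) ^ 2))
      (-∫ x in (0:ℝ)..(2 * π),
        (N τ x) ^ 2 * Real.exp (-((v₁ τ x) ^ 2 + (v₂ τ x) ^ 2) / 4) *
          Real.sqrt ((deriv (v₁ τ) x) ^ 2 + (deriv (v₂ τ) x) ^ 2)) τ := by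
  intro τ
  have hw₁ : ContDiff ℝ 2 (uncurry v₁) := contDiff_infty.1 hv₁ 2
  have hw₂ : ContDiff ℝ 2 (uncurry v₂) := contDiff_infty.1 hv₂ 2
  have hslice₁ (t : ℝ) : ContDiff ℝ 2 (v₁ t) := contDiff_of_contDiff_uncurry hw₁ t
  have hslice₂ (t : ℝ) : ContDiff ℝ 2 (v₂ t) := contDiff_of_contDiff_uncurry hw₂ t
  have hd₁ (t : ℝ) : Differentiable ℝ (v₁ t) := (hslice₁ t).differentiable two_ne_zero
  have hd₂ (t : ℝ) : Differentiable ℝ (v₂ t) := (hslice₂ t).differentiable two_ne_zero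
  have hvelocity (x : ℝ) := deriv_planeCurve_fst (hw₁.differentiable two_ne_zero)
    (hw₂.differentiable two_ne_zero) τ x
  have hmonotone := huisken_monotonicity_formula_general (contDiff_uncurry_planeCurve hw₁ hw₂)
    (fun t => periodic_planeCurve (hper₁ t) (hper₂ t))
    (fun t x => deriv_planeCurve_ne_zero (hd₁ t) (hd₂ t) (himm t x))
    (fun x => hvelocity x ▸ planeCurve_sub_rescaledFlowVector_mem_span (hslice₁ τ) (hslice₂ τ)
      (himm τ x) (hpde₁ τ x) (hpde₂ τ x))
  simpa only [gaussianSpeed_planeCurve (hd₁ _) (hd₂ _), hvelocity,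
    norm_sq_normalProjection_planeCurve (hd₁ _) (hd₂ _) (himm _ _), ← hN, mul_assoc] using hmonotone
end

section
/- The function f(ψ) = ψ sin ψ + cos ψ · log(cos ψ) is even on (−π/2, π/2) (f(−ψ) = f(ψ)) and convex on (−π/2, π/2). -/
open Real

/-!
The second derivative of `f` on `(-π/2, π/2)` is `cos ψ + (tan ψ - ψ) sin ψ - cos ψ log (cos ψ)`.
Each of its terms is nonnegative and the first is positive, because `tan ψ - ψ` and `sin ψ` have
the same sign and `0 < cos ψ ≤ 1`. At the endpoints the convention `0 * log 0 = 0` agrees with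
the continuous extension of `f`.
-/

lemma tan_sub_self_mul_sin_nonneg {x : ℝ} (hx : x ∈ Set.Ioo (-(π / 2)) (π / 2)) :
    0 ≤ (tan x - x) * sin x := by
  wlog hx₀ : 0 ≤ x generalizing x
  · have h_neg := this (x := -x) ⟨neg_lt_neg hx.2, neg_lt.mp hx.1⟩ (by linarith)
    rw [tan_neg, sin_neg] at h_neg
    linarith
  · have h_tan : x ≤ tan x := le_tan hx₀ hx.2
    have h_sin : 0 ≤ sin x := sin_nonneg_of_nonneg_of_le_pi hx₀ (by linarith [hx.2, pi_pos])
    exact mul_nonneg (sub_nonneg.mpr h_tan) h_sin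

lemma even_mul_sin_add_cos_mul_log_cos :
    Function.Even fun x : ℝ ↦ x * sin x + cos x * log (cos x) := fun x ↦ by
  simp only [sin_neg, cos_neg, neg_mul_neg]

lemma continuous_mul_sin_add_cos_mul_log_cos :
    Continuous fun x : ℝ ↦ x * sin x + cos x * log (cos x) :=
  (continuous_id.mul continuous_sin).add (continuous_mul_log.comp continuous_cos)

lemma hasDerivAt_mul_sin_add_cos_mul_log_cos {x : ℝ} (hx : cos x ≠ 0) :
    HasDerivAt (fun y ↦ y * sin y + cos y * log (cos y)) (x * cos x - sin x * log (cos x)) x := by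
  have h := ((hasDerivAt_id' x).mul (hasDerivAt_sin x)).add
    ((hasDerivAt_mul_log hx).comp x (hasDerivAt_cos x))
  exact h.congr_deriv (by ring)

lemma hasDerivAt_mul_cos_sub_sin_mul_log_cos {x : ℝ} (hx : cos x ≠ 0) :
    HasDerivAt (fun y ↦ y * cos y - sin y * log (cos y))
      (cos x + (tan x - x) * sin x - cos x * log (cos x)) x := by
  have h := ((hasDerivAt_id' x).mul (hasDerivAt_cos x)).sub
    ((hasDerivAt_sin x).mul ((hasDerivAt_cos x).log hx))
  refine h.congr_deriv ?_
  rw [tan_eq_sin_div_cos]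
  ring

lemma deriv2_mul_sin_add_cos_mul_log_cos {x : ℝ} (hx : cos x ≠ 0) :
    deriv^[2] (fun y ↦ y * sin y + cos y * log (cos y)) x =
      cos x + (tan x - x) * sin x - cos x * log (cos x) := by
  have h_deriv : deriv (fun y ↦ y * sin y + cos y * log (cos y)) =ᶠ[nhds x]
      fun y ↦ y * cos y - sin y * log (cos y) := by
    filter_upwards [continuous_cos.continuousAt.eventually_ne hx] with y hy
    exact (hasDerivAt_mul_sin_add_cos_mul_log_cos hy).deriv
  exact h_deriv.deriv_eq.trans (hasDerivAt_mul_cos_sub_sin_mul_log_cos hx).deriv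

lemma strictConvexOn_mul_sin_add_cos_mul_log_cos :
    StrictConvexOn ℝ (Set.Icc (-(π / 2)) (π / 2))
      fun x ↦ x * sin x + cos x * log (cos x) := by
  refine strictConvexOn_of_deriv2_pos (convex_Icc _ _)
    continuous_mul_sin_add_cos_mul_log_cos.continuousOn fun x hx ↦ ?_
  rw [interior_Icc] at hx
  have h_cos : 0 < cos x := cos_pos_of_mem_Ioo hx
  have h_log : cos x * log (cos x) ≤ 0 := mul_log_nonpos h_cos.le (cos_le_one x)
  have h_tan : 0 ≤ (tan x - x) * sin x := tan_sub_self_mul_sin_nonneg hx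
  rw [deriv2_mul_sin_add_cos_mul_log_cos h_cos.ne']
  linarith

/-- The function `f(ψ) = ψ sin ψ + cos ψ · log (cos ψ)` is even and convex
on `(−π/2, π/2)`. -/
theorem f_even_and_convex
    (f : ℝ → ℝ)
    (hf : ∀ s : ℝ, f s = s * Real.sin s + Real.cos s * Real.log (Real.cos s)) :
    (∀ ψ ∈ Set.Ioo (-(π / 2)) (π / 2), f (-ψ) = f ψ) ∧
      ConvexOn ℝ (Set.Ioo (-(π / 2)) (π / 2)) f := by
  obtain rfl : f = fun s ↦ s * sin s + cos s * log (cos s) := funext hf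
  exact ⟨fun ψ _ ↦ even_mul_sin_add_cos_mul_log_cos ψ,
    strictConvexOn_mul_sin_add_cos_mul_log_cos.convexOn.subset Set.Ioo_subset_Icc_self
      (convex_Ioo _ _)⟩
end

section
/- Let h : ℝ → ℝ be continuous and 2π-periodic. There exists a twice continuously differentiable 2π-periodic function f : ℝ → ℝ with f''(φ) + f(φ) = h(φ) for all φ if and only if ∫₀^{2π} h(φ) cos φ dφ = 0 and ∫₀^{2π} h(φ) sin φ dφ = 0. -/
open Real

/-! For a solution of `f'' + f = h`, the functions `cos * f' + sin * f` and `sin * f' - cos * f` are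
antiderivatives of `cos * h` and `sin * h`; if `f` is periodic they are too, so `cos * h` and
`sin * h` have mean zero. Conversely, variation of constants gives the solution
`f x = sin x * ∫₀ˣ cos * h - cos x * ∫₀ˣ sin * h`, and the two integrals are periodic in `x` as soon
as `cos * h` and `sin * h` have mean zero. -/

section Periodic

variable {E : Type*} [NormedAddCommGroup E] [NormedSpace ℝ E] {T : ℝ}

theorem cos_periodic_of_cos_eq_one (hT : cos T = 1) : Function.Periodic cos T := by
  obtain ⟨n, rfl⟩ := (cos_eq_one_iff T).1 hT
  exact cos_periodic.int_mul n

theorem sin_periodic_of_cos_eq_one (hT : cos T = 1) : Function.Periodic sin T := by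
  obtain ⟨n, rfl⟩ := (cos_eq_one_iff T).1 hT
  exact sin_periodic.int_mul n

theorem periodic_deriv_s7 {𝕜 F : Type*} [NontriviallyNormedField 𝕜] [NormedAddCommGroup F]
    [NormedSpace 𝕜 F] {f : 𝕜 → F} {c : 𝕜} (hf : Function.Periodic f c) :
    Function.Periodic (deriv f) c := fun x => by
  rw [← deriv_comp_add_const, hf.funext]

theorem periodic_smul {α R M : Type*} [Add α] [SMul R M] {u : α → R} {f : α → M} {c : α}
    (hu : Function.Periodic u c) (hf : Function.Periodic f c) :
    Function.Periodic (fun x => u x • f x) c := fun x => by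
  simp only [hu x, hf x]

theorem periodic_primitive_of_integral_eq_zero {g : ℝ → E} (hg : Function.Periodic g T)
    (hint : ∀ a b, IntervalIntegrable g MeasureTheory.volume a b)
    (hmean : ∫ t in 0..T, g t = 0) : Function.Periodic (fun x => ∫ t in 0..x, g t) T := fun x => by
  simpa only [zero_add, hmean, add_zero] using hg.intervalIntegral_add_eq_add 0 x hint

end Periodic

section Oscillator

variable {E : Type*} [NormedAddCommGroup E] [NormedSpace ℝ E] {f h : ℝ → E} {T : ℝ}

/-- The solution of `f'' + f = h` with `f 0 = f' 0 = 0` given by variation of constants. It equals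
`∫ t in 0..x, sin (x - t) • h t`; the addition formula is already expanded, so that `x` occurs in
the integrals only as an endpoint. -/
noncomputable def duhamelSolution (h : ℝ → E) (x : ℝ) : E :=
  sin x • (∫ t in 0..x, cos t • h t) - cos x • ∫ t in 0..x, sin t • h t

/-- The derivative of `duhamelSolution h`, that is `∫ t in 0..x, cos (x - t) • h t`. -/
noncomputable def duhamelVelocity (h : ℝ → E) (x : ℝ) : E :=
  cos x • (∫ t in 0..x, cos t • h t) + sin x • ∫ t in 0..x, sin t • h t

theorem periodic_duhamelSolution (hT : cos T = 1) (hh : Continuous h)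
    (hper : Function.Periodic h T) (hcos : ∫ t in 0..T, cos t • h t = 0)
    (hsin : ∫ t in 0..T, sin t • h t = 0) : Function.Periodic (duhamelSolution h) T := by
  have cos_per := cos_periodic_of_cos_eq_one hT
  have sin_per := sin_periodic_of_cos_eq_one hT
  have hC := periodic_primitive_of_integral_eq_zero (periodic_smul cos_per hper)
    (continuous_cos.smul hh).intervalIntegrable hcos
  have hS := periodic_primitive_of_integral_eq_zero (periodic_smul sin_per hper)
    (continuous_sin.smul hh).intervalIntegrable hsin
  exact (periodic_smul sin_per hC).sub (periodic_smul cos_per hS)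

variable [CompleteSpace E]

theorem hasDerivAt_integral_smul {u : ℝ → ℝ} (hu : Continuous u) (hh : Continuous h) (a x : ℝ) :
    HasDerivAt (fun y => ∫ t in a..y, u t • h t) (u x • h x) x :=
  ((hu.smul hh).integral_hasStrictDerivAt a x).hasDerivAt

theorem hasDerivAt_duhamelSolution (hh : Continuous h) (x : ℝ) :
    HasDerivAt (duhamelSolution h) (duhamelVelocity h x) x := by
  have hC := hasDerivAt_integral_smul continuous_cos hh 0 x
  have hS := hasDerivAt_integral_smul continuous_sin hh 0 x
  refine (((hasDerivAt_sin x).smul hC).sub ((hasDerivAt_cos x).smul hS)).congr_deriv ?_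
  unfold duhamelVelocity
  module

theorem hasDerivAt_duhamelVelocity (hh : Continuous h) (x : ℝ) :
    HasDerivAt (duhamelVelocity h) (h x - duhamelSolution h x) x := by
  have hC := hasDerivAt_integral_smul continuous_cos hh 0 x
  have hS := hasDerivAt_integral_smul continuous_sin hh 0 x
  refine (((hasDerivAt_cos x).smul hC).add ((hasDerivAt_sin x).smul hS)).congr_deriv ?_
  unfold duhamelSolution
  linear_combination (norm := module) cos_sq_add_sin_sq x • h x

theorem deriv_duhamelSolution (hh : Continuous h) :
    deriv (duhamelSolution h) = duhamelVelocity h :=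
  funext fun x => (hasDerivAt_duhamelSolution hh x).deriv

theorem deriv_duhamelVelocity (hh : Continuous h) :
    deriv (duhamelVelocity h) = h - duhamelSolution h :=
  funext fun x => (hasDerivAt_duhamelVelocity hh x).deriv

theorem deriv_deriv_duhamelSolution_add (hh : Continuous h) (x : ℝ) :
    deriv (deriv (duhamelSolution h)) x + duhamelSolution h x = h x := by
  rw [deriv_duhamelSolution hh, deriv_duhamelVelocity hh, Pi.sub_apply, sub_add_cancel]

theorem contDiff_two_duhamelSolution (hh : Continuous h) : ContDiff ℝ 2 (duhamelSolution h) := by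
  have hf : Differentiable ℝ (duhamelSolution h) := fun x =>
    (hasDerivAt_duhamelSolution hh x).differentiableAt
  have hv : Differentiable ℝ (duhamelVelocity h) := fun x =>
    (hasDerivAt_duhamelVelocity hh x).differentiableAt
  have hv₁ : ContDiff ℝ 1 (duhamelVelocity h) := contDiff_one_iff_deriv.2
    ⟨hv, deriv_duhamelVelocity hh ▸ hh.sub hf.continuous⟩
  rw [← one_add_one_eq_two, contDiff_succ_iff_deriv, deriv_duhamelSolution hh]
  exact ⟨hf, by simp, hv₁⟩

theorem integral_cos_smul_deriv_deriv_add (hf : ContDiff ℝ 2 f) (a b : ℝ) :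
    ∫ x in a..b, cos x • (deriv (deriv f) x + f x) =
      (cos b • deriv f b + sin b • f b) - (cos a • deriv f a + sin a • f a) := by
  refine intervalIntegral.integral_eq_sub_of_hasDerivAt
    (f := fun x => cos x • deriv f x + sin x • f x) (fun x _ => ?_)
    (Continuous.intervalIntegrable (by fun_prop) a b)
  have hf₁ := (hf.differentiable two_ne_zero x).hasDerivAt
  have hf₂ := (hf.differentiable_deriv_two x).hasDerivAt
  refine (((hasDerivAt_cos x).smul hf₂).add ((hasDerivAt_sin x).smul hf₁)).congr_deriv ?_
  module

theorem integral_sin_smul_deriv_deriv_add (hf : ContDiff ℝ 2 f) (a b : ℝ) :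
    ∫ x in a..b, sin x • (deriv (deriv f) x + f x) =
      (sin b • deriv f b - cos b • f b) - (sin a • deriv f a - cos a • f a) := by
  refine intervalIntegral.integral_eq_sub_of_hasDerivAt
    (f := fun x => sin x • deriv f x - cos x • f x) (fun x _ => ?_)
    (Continuous.intervalIntegrable (by fun_prop) a b)
  have hf₁ := (hf.differentiable two_ne_zero x).hasDerivAt
  have hf₂ := (hf.differentiable_deriv_two x).hasDerivAt
  refine (((hasDerivAt_sin x).smul hf₂).sub ((hasDerivAt_cos x).smul hf₁)).congr_deriv ?_
  module

theorem periodic_solvability_criterion_general (hT : cos T = 1) (hh : Continuous h)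
    (hper : Function.Periodic h T) :
    (∃ f : ℝ → E, ContDiff ℝ 2 f ∧ Function.Periodic f T ∧
        ∀ x, deriv (deriv f) x + f x = h x) ↔
      ∫ x in 0..T, cos x • h x = 0 ∧ ∫ x in 0..T, sin x • h x = 0 := by
  constructor
  · rintro ⟨f, hf, hf_per, hode⟩
    obtain rfl : (fun x => deriv (deriv f) x + f x) = h := funext hode
    have sin_T := (sin_periodic_of_cos_eq_one hT).eq
    rw [integral_cos_smul_deriv_deriv_add hf, integral_sin_smul_deriv_deriv_add hf, hT, sin_T,
      hf_per.eq, (periodic_deriv_s7 hf_per).eq, cos_zero]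
    exact ⟨sub_self _, sub_self _⟩
  · rintro ⟨hcos, hsin⟩
    exact ⟨duhamelSolution h, contDiff_two_duhamelSolution hh,
      periodic_duhamelSolution hT hh hper hcos hsin, deriv_deriv_duhamelSolution_add hh⟩

end Oscillator

/-- For continuous `2π`-periodic `h`, there is a `C²` `2π`-periodic solution of
`f'' + f = h` if and only if `∫₀^{2π} h cos = 0` and `∫₀^{2π} h sin = 0`. -/
theorem periodic_solvability_criterion
    (h : ℝ → ℝ) (hh : Continuous h)
    (hper : ∀ φ : ℝ, h (φ + 2 * π) = h φ) :
    (∃ f : ℝ → ℝ, ContDiff ℝ 2 f ∧ (∀ φ : ℝ, f (φ + 2 * π) = f φ) ∧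
        ∀ φ : ℝ, deriv (deriv f) φ + f φ = h φ) ↔
      (∫ φ in (0:ℝ)..(2 * π), h φ * Real.cos φ) = 0 ∧
        (∫ φ in (0:ℝ)..(2 * π), h φ * Real.sin φ) = 0 := by
  simpa only [smul_eq_mul, mul_comm (h _), Function.Periodic] using
    periodic_solvability_criterion_general cos_two_pi hh hper
end

section
/- Let g : ℝ → ℝ be continuous and let b̃ : ℝ³ → ℝ be continuously differentiable. Define b(ξ₁, ξ₂, φ) := b̃(ξ₁ cos φ + ξ₂ sin φ, ξ₁ sin φ − ξ₂ cos φ, φ). Then b satisfies 2g(φ) cos φ · ∂b/∂ξ₁ + 2g(φ) sin φ · ∂b/∂ξ₂ + (ξ₁ sin φ − ξ₂ cos φ) · ∂b/∂φ = −ξ₁ cos φ − ξ₂ sin φ at a point (ξ₁, ξ₂, φ) if and only if b̃ satisfies (2g(φ) − ξ̃₂²)·∂b̃/∂ξ̃₁ + ξ̃₁ξ̃₂·∂b̃/∂ξ̃₂ + ξ̃₂·∂b̃/∂φ = −ξ̃₁ at the corresponding point (ξ̃₁, ξ̃₂, φ) = (ξ₁ cos φ + ξ₂ sin φ, ξ₁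 sin φ − ξ₂ cos φ, φ). -/
open Real

/-!
The left-hand side of the equation for `b` is the derivative of `b` along the vector field
`V = 2g cos φ ∂₁ + 2g sin φ ∂₂ + ξ̃₂ ∂_φ`. Since `∂_φ ξ̃₁ = -ξ̃₂` and `∂_φ ξ̃₂ = ξ̃₁`, this field
satisfies `V ξ̃₁ = 2g - ξ̃₂²`, `V ξ̃₂ = ξ̃₁ ξ̃₂` and `V φ = ξ̃₂`, so by the chain rule `V b` is the
left-hand side of the equation for `b̃`.
-/

section ChainRule

variable {𝕜 E : Type*} [NontriviallyNormedField 𝕜] [NormedAddCommGroup E] [NormedSpace 𝕜 E]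
  {f : 𝕜 → 𝕜 → 𝕜 → E} {u v w : 𝕜 → 𝕜} {u' v' w' t : 𝕜}

theorem hasDerivAt_comp₃_of_hasFDerivAt {L : 𝕜 × 𝕜 × 𝕜 →L[𝕜] E}
    (hf : HasFDerivAt (fun p : 𝕜 × 𝕜 × 𝕜 => f p.1 p.2.1 p.2.2) L (u t, v t, w t))
    (hu : HasDerivAt u u' t) (hv : HasDerivAt v v' t) (hw : HasDerivAt w w' t) :
    HasDerivAt (fun s => f (u s) (v s) (w s)) (L (u', v', w')) t :=
  hf.comp_hasDerivAt (f := fun s => (u s, v s, w s)) t (hu.prodMk (hv.prodMk hw))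

theorem hasDerivAt_comp₃
    (hf : DifferentiableAt 𝕜 (fun p : 𝕜 × 𝕜 × 𝕜 => f p.1 p.2.1 p.2.2) (u t, v t, w t))
    (hu : HasDerivAt u u' t) (hv : HasDerivAt v v' t) (hw : HasDerivAt w w' t) :
    HasDerivAt (fun s => f (u s) (v s) (w s))
      (u' • deriv (fun s => f s (v t) (w t)) (u t) + v' • deriv (fun s => f (u t) s (w t)) (v t) +
        w' • deriv (fun s => f (u t) (v t) s) (w t)) t := by
  obtain ⟨L, hL⟩ := hf
  have partial₁ : deriv (fun s => f s (v t) (w t)) (u t) = L (1, 0, 0) :=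
    (hasDerivAt_comp₃_of_hasFDerivAt (u := fun s => s) hL (hasDerivAt_id _)
      (hasDerivAt_const _ _) (hasDerivAt_const _ _)).deriv
  have partial₂ : deriv (fun s => f (u t) s (w t)) (v t) = L (0, 1, 0) :=
    (hasDerivAt_comp₃_of_hasFDerivAt (v := fun s => s) hL (hasDerivAt_const _ _)
      (hasDerivAt_id _) (hasDerivAt_const _ _)).deriv
  have partial₃ : deriv (fun s => f (u t) (v t) s) (w t) = L (0, 0, 1) :=
    (hasDerivAt_comp₃_of_hasFDerivAt (w := fun s => s) hL (hasDerivAt_const _ _)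
      (hasDerivAt_const _ _) (hasDerivAt_id _)).deriv
  have decomposition : ((u', v', w') : 𝕜 × 𝕜 × 𝕜) =
      u' • (1, 0, 0) + v' • (0, 1, 0) + w' • (0, 0, 1) := by simp
  simpa only [partial₁, partial₂, partial₃, decomposition, map_add, map_smul] using
    hasDerivAt_comp₃_of_hasFDerivAt hL hu hv hw

end ChainRule

/-- The new coordinate `ξ̃₁ = ξ₁ cos φ + ξ₂ sin φ`. For fixed `φ`, the map `(ξ₁, ξ₂) ↦ (ξ̃₁, ξ̃₂)`
is the reflection of the plane in the line at angle `φ / 2`. -/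
noncomputable def reflectFst (ξ₁ ξ₂ φ : ℝ) : ℝ := ξ₁ * cos φ + ξ₂ * sin φ

/-- The new coordinate `ξ̃₂ = ξ₁ sin φ - ξ₂ cos φ`, the companion of `reflectFst`. -/
noncomputable def reflectSnd (ξ₁ ξ₂ φ : ℝ) : ℝ := ξ₁ * sin φ - ξ₂ * cos φ

section Reflection

variable (ξ₁ ξ₂ φ : ℝ)

theorem hasDerivAt_reflectFst_fst : HasDerivAt (fun s => reflectFst s ξ₂ φ) (cos φ) ξ₁ :=
  (hasDerivAt_mul_const (cos φ)).add_const (ξ₂ * sin φ)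

theorem hasDerivAt_reflectSnd_fst : HasDerivAt (fun s => reflectSnd s ξ₂ φ) (sin φ) ξ₁ :=
  (hasDerivAt_mul_const (sin φ)).sub_const (ξ₂ * cos φ)

theorem hasDerivAt_reflectFst_snd : HasDerivAt (fun s => reflectFst ξ₁ s φ) (sin φ) ξ₂ :=
  (hasDerivAt_mul_const (sin φ)).const_add (ξ₁ * cos φ)

theorem hasDerivAt_reflectSnd_snd : HasDerivAt (fun s => reflectSnd ξ₁ s φ) (-cos φ) ξ₂ :=
  (hasDerivAt_mul_const (cos φ)).const_sub (ξ₁ * sin φ)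

theorem hasDerivAt_reflectFst_angle :
    HasDerivAt (fun s => reflectFst ξ₁ ξ₂ s) (-reflectSnd ξ₁ ξ₂ φ) φ := by
  refine (((hasDerivAt_cos φ).const_mul ξ₁).add ((hasDerivAt_sin φ).const_mul ξ₂)).congr_deriv ?_
  rw [reflectSnd]
  ring

theorem hasDerivAt_reflectSnd_angle :
    HasDerivAt (fun s => reflectSnd ξ₁ ξ₂ s) (reflectFst ξ₁ ξ₂ φ) φ := by
  refine (((hasDerivAt_sin φ).const_mul ξ₁).sub ((hasDerivAt_cos φ).const_mul ξ₂)).congr_deriv ?_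
  rw [reflectFst]
  ring

end Reflection

theorem coordinate_change_of_PDE_general {E : Type*} [NormedAddCommGroup E] [NormedSpace ℝ E]
    (g : ℝ → ℝ) {bt b : ℝ → ℝ → ℝ → E} {ξ₁ ξ₂ φ : ℝ}
    (hbt : DifferentiableAt ℝ (fun p : ℝ × ℝ × ℝ => bt p.1 p.2.1 p.2.2)
      (reflectFst ξ₁ ξ₂ φ, reflectSnd ξ₁ ξ₂ φ, φ))
    (hb : ∀ ξ₁ ξ₂ φ, b ξ₁ ξ₂ φ = bt (reflectFst ξ₁ ξ₂ φ) (reflectSnd ξ₁ ξ₂ φ) φ) :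
    (2 * g φ * cos φ) • deriv (fun s => b s ξ₂ φ) ξ₁ +
        (2 * g φ * sin φ) • deriv (fun s => b ξ₁ s φ) ξ₂ +
        reflectSnd ξ₁ ξ₂ φ • deriv (fun s => b ξ₁ ξ₂ s) φ =
      (2 * g φ - reflectSnd ξ₁ ξ₂ φ ^ 2) •
          deriv (fun s => bt s (reflectSnd ξ₁ ξ₂ φ) φ) (reflectFst ξ₁ ξ₂ φ) +
        (reflectFst ξ₁ ξ₂ φ * reflectSnd ξ₁ ξ₂ φ) •
          deriv (fun s => bt (reflectFst ξ₁ ξ₂ φ) s φ) (reflectSnd ξ₁ ξ₂ φ) +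
        reflectSnd ξ₁ ξ₂ φ •
          deriv (fun s => bt (reflectFst ξ₁ ξ₂ φ) (reflectSnd ξ₁ ξ₂ φ) s) φ := by
  have deriv_fst := (hasDerivAt_comp₃ hbt (hasDerivAt_reflectFst_fst ξ₁ ξ₂ φ)
    (hasDerivAt_reflectSnd_fst ξ₁ ξ₂ φ) (hasDerivAt_const ξ₁ φ)).deriv
  have deriv_snd := (hasDerivAt_comp₃ hbt (hasDerivAt_reflectFst_snd ξ₁ ξ₂ φ)
    (hasDerivAt_reflectSnd_snd ξ₁ ξ₂ φ) (hasDerivAt_const ξ₂ φ)).deriv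
  have deriv_angle := (hasDerivAt_comp₃ hbt (hasDerivAt_reflectFst_angle ξ₁ ξ₂ φ)
    (hasDerivAt_reflectSnd_angle ξ₁ ξ₂ φ) (hasDerivAt_id φ)).deriv
  have coeff_fst : 2 * g φ * cos φ * cos φ + 2 * g φ * sin φ * sin φ +
      reflectSnd ξ₁ ξ₂ φ * -reflectSnd ξ₁ ξ₂ φ = 2 * g φ - reflectSnd ξ₁ ξ₂ φ ^ 2 := by
    linear_combination 2 * g φ * sin_sq_add_cos_sq φ
  simp only [hb, id_eq] at deriv_fst deriv_snd deriv_angle ⊢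
  rw [deriv_fst, deriv_snd, deriv_angle, ← coeff_fst]
  module

/-- The coordinate transformation `ξ̃₁ = ξ₁ cos φ + ξ₂ sin φ`,
`ξ̃₂ = ξ₁ sin φ − ξ₂ cos φ`, `φ̃ = φ` converts the first-order PDE
`2g(φ) cos φ·∂b/∂ξ₁ + 2g(φ) sin φ·∂b/∂ξ₂ + (ξ₁ sin φ − ξ₂ cos φ)·∂b/∂φ
  = −ξ₁ cos φ − ξ₂ sin φ`
into the PDE (1-PDE)
`(2g(φ) − ξ̃₂²)·∂b̃/∂ξ̃₁ + ξ̃₁ξ̃₂·∂b̃/∂ξ̃₂ + ξ̃₂·∂b̃/∂φ = −ξ̃₁`. -/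
theorem coordinate_change_of_PDE
    (g : ℝ → ℝ) (hg : Continuous g)
    (bt : ℝ → ℝ → ℝ → ℝ)
    (hbt : ContDiff ℝ 1 (fun p : ℝ × ℝ × ℝ => bt p.1 p.2.1 p.2.2))
    (b : ℝ → ℝ → ℝ → ℝ)
    (hb : ∀ ξ₁ ξ₂ φ : ℝ, b ξ₁ ξ₂ φ =
      bt (ξ₁ * Real.cos φ + ξ₂ * Real.sin φ) (ξ₁ * Real.sin φ - ξ₂ * Real.cos φ) φ) :
    ∀ ξ₁ ξ₂ φ : ℝ,
      (2 * g φ * Real.cos φ * deriv (fun s => b s ξ₂ φ) ξ₁ +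
          2 * g φ * Real.sin φ * deriv (fun s => b ξ₁ s φ) ξ₂ +
          (ξ₁ * Real.sin φ - ξ₂ * Real.cos φ) * deriv (fun s => b ξ₁ ξ₂ s) φ
        = -ξ₁ * Real.cos φ - ξ₂ * Real.sin φ) ↔
      ((2 * g φ - (ξ₁ * Real.sin φ - ξ₂ * Real.cos φ) ^ 2) *
            deriv (fun s => bt s (ξ₁ * Real.sin φ - ξ₂ * Real.cos φ) φ)
              (ξ₁ * Real.cos φ + ξ₂ * Real.sin φ) +
          (ξ₁ * Real.cos φ + ξ₂ * Real.sin φ) * (ξ₁ * Real.sin φ - ξ₂ * Real.cos φ) *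
            deriv (fun s => bt (ξ₁ * Real.cos φ + ξ₂ * Real.sin φ) s φ)
              (ξ₁ * Real.sin φ - ξ₂ * Real.cos φ) +
          (ξ₁ * Real.sin φ - ξ₂ * Real.cos φ) *
            deriv (fun s => bt (ξ₁ * Real.cos φ + ξ₂ * Real.sin φ)
              (ξ₁ * Real.sin φ - ξ₂ * Real.cos φ) s) φ
        = -(ξ₁ * Real.cos φ + ξ₂ * Real.sin φ)) := by
  intro ξ₁ ξ₂ φ
  have h := coordinate_change_of_PDE_general g (hbt.differentiable one_ne_zero _) hb
    (ξ₁ := ξ₁) (ξ₂ := ξ₂) (φ := φ)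
  simp only [smul_eq_mul, reflectFst, reflectSnd] at h
  rw [h, neg_add', neg_mul]
end
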